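/- For every integer w ≥ 3, ∑_{a+b=w, a≥2, b≥1} 2^{a−1}·( ζ(a,b̄) + ζ(ā,b̄) ) = ζ(w) + w·ζ(w̄). -/

import Mathlib

open Filter

/-- Depth-1 Euler sum `ζ(s; e) = ∑_{n ≥ 1} eⁿ / nˢ`,
defined as the limit of partial sums. `e = 1` gives `ζ(s)`, `e = -1` gives `ζ(s̄)`. -/
noncomputable def eulerSum1 (s : ℕ) (e : ℝ) : ℝ :=
  limUnder atTop (fun N : ℕ =>
    ∑ n ∈ Finset.Icc 1 N, e ^ n / (n : ℝ) ^ s)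

/-- Depth-2 Euler sum `ζ(s₁, s₂; e₁, e₂) = ∑_{n₁ > n₂ ≥ 1} e₁^{n₁} e₂^{n₂} / (n₁^{s₁} n₂^{s₂})`,
defined as the limit of iterated partial sums. A bar over an argument means the
corresponding sign is `-1`. -/
noncomputable def eulerSum2 (s₁ s₂ : ℕ) (e₁ e₂ : ℝ) : ℝ :=
  limUnder atTop (fun N : ℕ =>
    ∑ n₁ ∈ Finset.Icc 1 N, ∑ n₂ ∈ Finset.Ico 1 n₁,
      e₁ ^ n₁ * e₂ ^ n₂ / ((n₁ : ℝ) ^ s₁ * (n₂ : ℝ) ^ s₂))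

/-- Depth-3 Euler sum
`ζ(s₁, s₂, s₃; e₁, e₂, e₃) = ∑_{n₁ > n₂ > n₃ ≥ 1} e₁^{n₁} e₂^{n₂} e₃^{n₃} / (n₁^{s₁} n₂^{s₂} n₃^{s₃})`. -/
noncomputable def eulerSum3 (s₁ s₂ s₃ : ℕ) (e₁ e₂ e₃ : ℝ) : ℝ :=
  limUnder atTop (fun N : ℕ =>
    ∑ n₁ ∈ Finset.Icc 1 N, ∑ n₂ ∈ Finset.Ico 1 n₁, ∑ n₃ ∈ Finset.Ico 1 n₂,
      e₁ ^ n₁ * e₂ ^ n₂ * e₃ ^ n₃ / ((n₁ : ℝ) ^ s₁ * (n₂ : ℝ) ^ s₂ * (n₃ : ℝ) ^ s₃))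

/-- Depth-1 multiple T-value `T(s) = 2 ∑_{m odd, m ≥ 1} 1 / mˢ`. -/
noncomputable def tValue1 (s : ℕ) : ℝ :=
  limUnder atTop (fun N : ℕ =>
    ∑ m ∈ Finset.Icc 1 N, if m % 2 = 1 then 2 / (m : ℝ) ^ s else 0)

/-- Depth-2 multiple T-value
`T(s₁, s₂) = ∑_{m₁ > m₂ > 0, m₁ even, m₂ odd} 4 / (m₁^{s₁} m₂^{s₂})`. -/
noncomputable def tValue2 (s₁ s₂ : ℕ) : ℝ :=
  limUnder atTop (fun N : ℕ =>
    ∑ m₁ ∈ Finset.Icc 1 N, ∑ m₂ ∈ Finset.Ico 1 m₁,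
      if m₁ % 2 = 0 ∧ m₂ % 2 = 1 then 4 / ((m₁ : ℝ) ^ s₁ * (m₂ : ℝ) ^ s₂) else 0)

/-- Depth-3 multiple T-value
`T(s₁, s₂, s₃) = ∑_{m₁ > m₂ > m₃ > 0, m₁ odd, m₂ even, m₃ odd} 8 / (m₁^{s₁} m₂^{s₂} m₃^{s₃})`. -/
noncomputable def tValue3 (s₁ s₂ s₃ : ℕ) : ℝ :=
  limUnder atTop (fun N : ℕ =>
    ∑ m₁ ∈ Finset.Icc 1 N, ∑ m₂ ∈ Finset.Ico 1 m₁, ∑ m₃ ∈ Finset.Ico 1 m₂,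
      if m₁ % 2 = 1 ∧ m₂ % 2 = 0 ∧ m₃ % 2 = 1 then
        8 / ((m₁ : ℝ) ^ s₁ * (m₂ : ℝ) ^ s₂ * (m₃ : ℝ) ^ s₃) else 0)

/-!
Adding the two signs of the outer variable keeps only even outer indices `2m`, so that
`2^(a-1) (ζ(a, b̄) + ζ(ā, b̄)) = ∑_m ∑_{0 < n < 2m} (-1)^n / (m^a n^b)`. For fixed `m` and `n` the
sum over `a + b = w` is geometric. Its diagonal part `n = m` gives `(w - 2) ζ(w̄)`; off the diagonal
it is `(1 / n^(w-2) - 1 / m^(w-2)) / (m (m - n))`, whose second half cancels under `n ↦ 2m - n`.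
The first half is an absolutely convergent double series: for fixed `n`, the sum of
`1 / (m (m - n))` over `m > n / 2`, `m ≠ n`, telescopes to `(2 + (-1)^n) / n^2`, which produces
`ζ(w) + 2 ζ(w̄)`.
-/

open Finset

section Convergence

theorem limUnder_sum_Icc_one {α : Type*} [AddCommMonoid α] [TopologicalSpace α] [T2Space α]
    {f : ℕ → α} {s : α} (hf : HasSum f s) (h0 : f 0 = 0) :
    limUnder atTop (fun N : ℕ => ∑ n ∈ Icc 1 N, f n) = s := by
  have hlim := (tendsto_add_atTop_iff_nat 1).2 hf.tendsto_sum_nat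
  refine (hlim.congr fun N => ?_).limUnder_eq
  rw [range_eq_Ico, sum_eq_sum_Ico_succ_bot N.succ_pos, h0, zero_add, zero_add,
    Nat.succ_eq_add_one, Ico_add_one_right_eq_Icc]

theorem hasSum_eulerSum1 {s : ℕ} (hs : 2 ≤ s) {e : ℝ} (he : |e| ≤ 1) :
    HasSum (fun n : ℕ => e ^ n / (n : ℝ) ^ s) (eulerSum1 s e) := by
  have hsum : Summable fun n : ℕ => e ^ n / (n : ℝ) ^ s := by
    refine .of_norm_bounded (Real.summable_one_div_nat_pow.2 hs) fun n => ?_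
    rw [norm_div, norm_pow, norm_pow, Real.norm_natCast, Real.norm_eq_abs]
    gcongr
    exact pow_le_one₀ (abs_nonneg e) he
  rw [eulerSum1, limUnder_sum_Icc_one hsum.hasSum (by simp [show s ≠ 0 by omega])]
  exact hsum.hasSum

theorem one_div_mul_mul_le_rpow {c x y z : ℝ} (hx : 0 < x) (hy : 0 < y) (hz : 0 < z)
    (hyx : y ≤ c * x) (hzx : z ≤ c * x) :
    1 / (x * (y * z)) ≤ c * (y ^ (-(3 / 2) : ℝ) * z ^ (-(3 / 2) : ℝ)) := by
  have hyz : 0 < y * z := mul_pos hy hz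
  have hsqrt : √(y * z) ≤ c * x :=
    Real.sqrt_le_iff.2 ⟨hy.le.trans hyx, by rw [sq]; gcongr; exact hy.le.trans hyx⟩
  have hrpow : (y * z) ^ (-(3 / 2) : ℝ) = 1 / (y * z * √(y * z)) := by
    rw [Real.rpow_neg hyz.le, Real.sqrt_eq_rpow, one_div, show (3 / 2 : ℝ) = 1 + 1 / 2 by norm_num,
      Real.rpow_add hyz, Real.rpow_one]
  rw [← Real.mul_rpow hy.le hz.le, hrpow, mul_one_div, div_le_div_iff₀ (by positivity)
    (by positivity), one_mul]
  calc y * z * √(y * z) ≤ y * z * (c * x) := by gcongr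
    _ = c * (x * (y * z)) := by ring

theorem norm_eulerSum2_term_le {a b : ℕ} (ha : 2 ≤ a) (hb : 1 ≤ b) {e₁ e₂ : ℝ}
    (h₁ : |e₁| ≤ 1) (h₂ : |e₂| ≤ 1) {n₁ n₂ : ℕ} (hn₂ : 0 < n₂) (hn : n₂ ≤ n₁) :
    ‖e₁ ^ n₁ * e₂ ^ n₂ / ((n₁ : ℝ) ^ a * (n₂ : ℝ) ^ b)‖
      ≤ (n₁ : ℝ) ^ (-(3 / 2) : ℝ) * (n₂ : ℝ) ^ (-(3 / 2) : ℝ) := by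
  have hn₂' : (1 : ℝ) ≤ n₂ := by exact_mod_cast hn₂
  have hn' : (n₂ : ℝ) ≤ n₁ := by exact_mod_cast hn
  have hn₁' : (1 : ℝ) ≤ n₁ := hn₂'.trans hn'
  calc ‖e₁ ^ n₁ * e₂ ^ n₂ / ((n₁ : ℝ) ^ a * (n₂ : ℝ) ^ b)‖
      = |e₁| ^ n₁ * |e₂| ^ n₂ / ((n₁ : ℝ) ^ a * (n₂ : ℝ) ^ b) := by simp
    _ ≤ 1 * 1 / ((n₁ : ℝ) ^ 2 * (n₂ : ℝ) ^ 1) := by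
        gcongr
        · exact pow_le_one₀ (abs_nonneg _) h₁
        · exact pow_le_one₀ (abs_nonneg _) h₂
    _ = 1 / (n₁ * (n₁ * n₂)) := by ring
    _ ≤ 1 * ((n₁ : ℝ) ^ (-(3 / 2) : ℝ) * (n₂ : ℝ) ^ (-(3 / 2) : ℝ)) :=
        one_div_mul_mul_le_rpow (by linarith) (by linarith) (by linarith) (by linarith)
          (by linarith)
    _ = _ := one_mul _

theorem hasSum_eulerSum2 {a b : ℕ} (ha : 2 ≤ a) (hb : 1 ≤ b) {e₁ e₂ : ℝ}
    (h₁ : |e₁| ≤ 1) (h₂ : |e₂| ≤ 1) :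
    HasSum (fun n₁ : ℕ => ∑ n₂ ∈ Ico 1 n₁, e₁ ^ n₁ * e₂ ^ n₂ / ((n₁ : ℝ) ^ a * (n₂ : ℝ) ^ b))
      (eulerSum2 a b e₁ e₂) := by
  have hs : Summable fun n : ℕ => (n : ℝ) ^ (-(3 / 2) : ℝ) :=
    Real.summable_nat_rpow.2 (by norm_num)
  have hsum : Summable fun n₁ : ℕ =>
      ∑ n₂ ∈ Ico 1 n₁, e₁ ^ n₁ * e₂ ^ n₂ / ((n₁ : ℝ) ^ a * (n₂ : ℝ) ^ b) := by
    refine .of_norm_bounded (hs.mul_right (∑' n : ℕ, (n : ℝ) ^ (-(3 / 2) : ℝ))) fun n₁ => ?_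
    calc _ ≤ ∑ n₂ ∈ Ico 1 n₁, (n₁ : ℝ) ^ (-(3 / 2) : ℝ) * (n₂ : ℝ) ^ (-(3 / 2) : ℝ) :=
          norm_sum_le_of_le _ fun n₂ hn => norm_eulerSum2_term_le ha hb h₁ h₂
            (mem_Ico.1 hn).1 (mem_Ico.1 hn).2.le
      _ ≤ _ := by
          rw [← mul_sum]
          gcongr
          exact hs.sum_le_tsum _ fun n _ => by positivity
  rw [eulerSum2, limUnder_sum_Icc_one hsum.hasSum (by simp)]
  exact hsum.hasSum

end Convergence

section SignAveraging

theorem hasSum_two_mul_even {R : Type*} [Ring R] [TopologicalSpace R] [ContinuousAdd R]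
    {f : ℕ → R} {s t : R} (hs : HasSum f s) (ht : HasSum (fun n => (-1) ^ n * f n) t) :
    HasSum (fun m => 2 * f (2 * m)) (s + t) := by
  have hinj : Function.Injective fun m : ℕ => 2 * m := mul_right_injective₀ two_ne_zero
  refine ((hinj.hasSum_iff fun n hn => ?_).2 (hs.add ht)).congr_fun fun m => ?_
  · have hodd : Odd n := Nat.not_even_iff_odd.1 fun h => hn (by simpa using h)
    rw [hodd.neg_one_pow, neg_one_mul, add_neg_cancel]
  · simp [two_mul]

theorem hasSum_eulerSum2_add_eulerSum2_neg {a b : ℕ} (ha : 2 ≤ a) (hb : 1 ≤ b) {e : ℝ}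
    (he : |e| ≤ 1) :
    HasSum (fun m : ℕ => ∑ n ∈ Ico 1 (2 * m), e ^ n / ((m : ℝ) ^ a * (n : ℝ) ^ b))
      ((2 : ℝ) ^ (a - 1) * (eulerSum2 a b 1 e + eulerSum2 a b (-1) e)) := by
  have hpos := hasSum_eulerSum2 ha hb (e₁ := 1) (by simp) he
  have hneg := hasSum_eulerSum2 ha hb (e₁ := -1) (by simp) he
  simp only [one_pow, one_mul] at hpos
  simp only [mul_div_assoc, ← mul_sum] at hneg
  refine ((hasSum_two_mul_even hpos hneg).mul_left (2 ^ (a - 1))).congr_fun fun m => ?_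
  rw [← mul_assoc, ← pow_succ, Nat.sub_add_cancel (by omega), mul_sum]
  refine sum_congr rfl fun n _ => ?_
  rw [Nat.cast_mul, Nat.cast_two, mul_pow, mul_assoc, mul_div_assoc',
    mul_div_mul_left _ _ (by positivity)]

end SignAveraging

section FixedOuterIndex

theorem sum_Ico_one_div_pow_mul_pow {K : Type*} [Field K] {x y : K} (hx : x ≠ 0) (hy : y ≠ 0)
    (hxy : x ≠ y) (k : ℕ) :
    ∑ a ∈ Ico 2 (k + 2), 1 / (x ^ a * y ^ (k + 2 - a))
      = (1 / y ^ k - 1 / x ^ k) / (x * (x - y)) := by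
  have hsub : x - y ≠ 0 := sub_ne_zero.2 hxy
  induction k with
  | zero => simp
  | succ k ih =>
    have hshift : ∀ a ∈ Ico 2 (k + 2),
        1 / (x ^ a * y ^ (k + 1 + 2 - a)) = 1 / (x ^ a * y ^ (k + 2 - a)) / y := fun a ha => by
      rw [show k + 1 + 2 - a = k + 2 - a + 1 by grind, pow_succ, div_div, mul_assoc]
    rw [show k + 1 + 2 = k + 2 + 1 by ring, sum_Ico_succ_top (by omega), sum_congr rfl hshift,
      ← sum_div, ih, Nat.add_sub_cancel_left, pow_one]
    field_simp
    ring

theorem sum_Ico_neg_one_pow_div_sub (m : ℕ) :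
    ∑ n ∈ Ico 1 (2 * m), (-1 : ℝ) ^ n / ((m : ℝ) - n) = 0 := by
  rw [← self_eq_neg, ← sum_neg_distrib]
  refine (sum_nbij' (2 * m - ·) (2 * m - ·) ?_ ?_ ?_ ?_ fun n hn => ?_).symm
  any_goals (intro n hn; simp only [mem_Ico] at *; omega)
  have hle : n ≤ 2 * m := (mem_Ico.1 hn).2.le
  rw [Nat.cast_sub hle, ← div_neg, Nat.cast_mul, Nat.cast_two]
  congr 1
  · exact neg_one_pow_congr (by simp [Nat.even_sub hle])
  · ring

theorem sum_Ico_neg_one_pow_div_pow_mul_pow (k : ℕ) {m n : ℕ} (hm : 0 < m) (hn : 0 < n) :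
    ∑ a ∈ Ico 2 (k + 2), (-1 : ℝ) ^ n / ((m : ℝ) ^ a * (n : ℝ) ^ (k + 2 - a))
      = (if n = m then k * ((-1) ^ n / (m : ℝ) ^ (k + 2)) else 0)
        + (-1) ^ n / ((n : ℝ) ^ k * (m * ((m : ℝ) - n)))
        - 1 / (m : ℝ) ^ (k + 1) * ((-1) ^ n / ((m : ℝ) - n)) := by
  have hm' : (m : ℝ) ≠ 0 := by positivity
  have hn' : (n : ℝ) ≠ 0 := by positivity
  split_ifs with h
  · subst h
    have hconst : ∀ a ∈ Ico 2 (k + 2), (-1 : ℝ) ^ n / ((n : ℝ) ^ a * (n : ℝ) ^ (k + 2 - a))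
        = (-1) ^ n / (n : ℝ) ^ (k + 2) := fun a ha => by
      rw [← pow_add, Nat.add_sub_cancel' (mem_Ico.1 ha).2.le]
    -- the two fractions over `m - n` vanish because `x / 0 = 0`
    rw [sum_congr rfl hconst]
    simp
  · have hne : (m : ℝ) ≠ n := by exact_mod_cast Ne.symm h
    have hsub : (m : ℝ) - n ≠ 0 := sub_ne_zero.2 hne
    simp only [← mul_one_div ((-1 : ℝ) ^ n) (_ * _), ← mul_sum]
    rw [sum_Ico_one_div_pow_mul_pow hm' hn' hne]
    field_simp
    ring

theorem sum_Ico_sum_Ico_neg_one_pow_div_pow_mul_pow (k m : ℕ) :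
    ∑ a ∈ Ico 2 (k + 2), ∑ n ∈ Ico 1 (2 * m), (-1 : ℝ) ^ n / ((m : ℝ) ^ a * (n : ℝ) ^ (k + 2 - a))
      = k * ((-1) ^ m / (m : ℝ) ^ (k + 2))
        + ∑ n ∈ Ico 1 (2 * m), (-1 : ℝ) ^ n / ((n : ℝ) ^ k * (m * ((m : ℝ) - n))) := by
  rcases m.eq_zero_or_pos with rfl | hm
  · simp
  · rw [sum_comm, sum_congr rfl fun n hn =>
      sum_Ico_neg_one_pow_div_pow_mul_pow k hm (mem_Ico.1 hn).1,
      sum_sub_distrib, sum_add_distrib, ← mul_sum, sum_Ico_neg_one_pow_div_sub, sum_ite_eq',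
      if_pos (mem_Ico.2 (by omega)), mul_zero, sub_zero]

end FixedOuterIndex

section FixedInnerIndex

theorem hasSum_one_div_sub_one_div_succ (n : ℕ) :
    HasSum (fun k : ℕ => 1 / ((k : ℝ) + n + 1) - 1 / ((k : ℝ) + n + 2)) (1 / ((n : ℝ) + 1)) := by
  rw [hasSum_iff_tendsto_nat_of_nonneg fun k =>
    sub_nonneg.2 (one_div_le_one_div_of_le (by positivity) (by linarith))]
  have hpartial (N : ℕ) : ∑ k ∈ range N, (1 / ((k : ℝ) + n + 1) - 1 / ((k : ℝ) + n + 2))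
      = 1 / ((n : ℝ) + 1) - 1 / (((N + n : ℕ) : ℝ) + 1) := by
    have h := sum_range_sub' (fun k : ℕ => 1 / (((k + n : ℕ) : ℝ) + 1)) N
    rw [zero_add] at h
    rw [← h]
    refine sum_congr rfl fun k _ => ?_
    push_cast
    ring
  have hlim := (tendsto_add_atTop_iff_nat n).2 (tendsto_one_div_add_atTop_nhds_zero_nat (𝕜 := ℝ))
  simpa only [hpartial, sub_zero] using hlim.const_sub (1 / ((n : ℝ) + 1))

theorem hasSum_one_div_sub_one_div_add (n : ℕ) :
    HasSum (fun k : ℕ => 1 / ((k : ℝ) + 1) - 1 / ((k : ℝ) + n + 1)) (harmonic n) := by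
  induction n with
  | zero => simp
  | succ n ih =>
    rw [harmonic_succ]
    push_cast
    rw [← one_div]
    refine (ih.add (hasSum_one_div_sub_one_div_succ n)).congr_fun fun k => ?_
    ring

theorem sum_range_one_div_add (q r : ℕ) :
    ∑ i ∈ range r, 1 / ((q : ℝ) + i + 1) = harmonic (q + r) - harmonic q := by
  rw [harmonic, harmonic, sum_range_add, Rat.cast_add, add_sub_cancel_left]
  simp [add_assoc]

theorem sum_Ico_one_div_sub_sub_one_div {q r n : ℕ} (hn : q + r + 1 = n) :
    ∑ m ∈ Ico (q + 1) n, (1 / ((m : ℝ) - n) - 1 / m)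
      = harmonic q - harmonic (q + r) - harmonic r := by
  have hterm (i : ℕ) : 1 / (((q + 1 + i : ℕ) : ℝ) - n) - 1 / ((q + 1 + i : ℕ) : ℝ)
      = -(1 / ((r : ℝ) - i)) - 1 / ((q : ℝ) + i + 1) := by
    rw [← hn, ← div_neg]
    push_cast
    ring
  have hreflect : ∑ i ∈ range r, 1 / ((r : ℝ) - i) = harmonic r := by
    rw [← sum_range_reflect, harmonic, Rat.cast_sum]
    refine sum_congr rfl fun i hi => ?_
    rw [Nat.sub_sub, Nat.cast_sub (by grind), one_div]
    push_cast
    ring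
  rw [sum_Ico_eq_sum_range, show n - (q + 1) = r by omega, sum_congr rfl fun i _ => hterm i,
    sum_sub_distrib, sum_neg_distrib, hreflect, sum_range_one_div_add]
  ring

theorem div_mul_sub_eq {K : Type*} [Field K] {x y : K} (hx : x ≠ 0) (hxy : x ≠ y) :
    y / (x * (x - y)) = 1 / (x - y) - 1 / x := by
  have hsub : x - y ≠ 0 := sub_ne_zero.2 hxy
  field_simp
  ring

theorem sum_range_div_mul_sub {q r n : ℕ} (hn : q + r + 1 = n) :
    ∑ m ∈ range (n + 1), (if q < m then (n : ℝ) / (m * ((m : ℝ) - n)) else 0)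
      = harmonic q - harmonic (q + r) - harmonic r := by
  have hbelow : ∑ m ∈ Ico 0 (q + 1), (if q < m then (n : ℝ) / (m * ((m : ℝ) - n)) else 0) = 0 :=
    sum_eq_zero fun m hm => if_neg (by grind)
  rw [sum_range_succ, sub_self, mul_zero, div_zero, ite_self, add_zero, range_eq_Ico,
    ← sum_Ico_consecutive _ (Nat.zero_le (q + 1)) (by omega), hbelow, zero_add,
    ← sum_Ico_one_div_sub_sub_one_div hn]
  refine sum_congr rfl fun m hm => ?_
  rw [if_pos (by grind), div_mul_sub_eq (Nat.cast_ne_zero.2 (by grind))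
    (Nat.cast_injective.ne (by grind))]

theorem hasSum_div_mul_sub {q r n : ℕ} (hn : q + r + 1 = n) :
    HasSum (fun m : ℕ => if q < m then (n : ℝ) / (m * ((m : ℝ) - n)) else 0)
      (harmonic q - harmonic r + 1 / n) := by
  have hvalue : (harmonic q - harmonic r + 1 / n : ℝ)
      = harmonic q - harmonic (q + r) - harmonic r + harmonic n := by
    rw [← hn, harmonic_succ]
    push_cast
    ring
  rw [hvalue, ← sum_range_div_mul_sub hn]
  refine .sum_range_add ((hasSum_one_div_sub_one_div_add n).congr_fun fun j => ?_)
  rw [if_pos (by omega), div_mul_sub_eq (Nat.cast_ne_zero.2 (by omega))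
    (Nat.cast_injective.ne (by omega))]
  push_cast
  ring

theorem harmonic_half_sub_harmonic {n : ℕ} (hn : 0 < n) :
    (harmonic (n / 2) - harmonic (n - 1 - n / 2) : ℝ) = (1 + (-1) ^ n) / n := by
  rcases n.even_or_odd' with ⟨p, rfl | rfl⟩
  · obtain ⟨p, rfl⟩ : ∃ i, p = i + 1 := Nat.exists_eq_add_one.2 (by omega)
    rw [show 2 * (p + 1) / 2 = p + 1 by omega, show 2 * (p + 1) - 1 - (p + 1) = p by omega,
      harmonic_succ, (even_two_mul _).neg_one_pow]
    push_cast
    field_simp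
    ring
  · rw [show (2 * p + 1) / 2 = p by omega, show 2 * p + 1 - 1 - p = p by omega,
      (odd_two_mul_add_one p).neg_one_pow]
    simp

end FixedInnerIndex

section DoubleSeries

/-- The `(m, n)` entry of the double series `∑_{0 < n < 2m, n ≠ m} (-1)ⁿ / (nᵏ m (m - n))`, extended
by zero to all pairs so that the order of summation can be exchanged. The diagonal entries vanish
because `x / 0 = 0`. -/
noncomputable def wedgeTerm (k : ℕ) (p : ℕ × ℕ) : ℝ :=
  if p.2 ∈ Ico 1 (2 * p.1) then (-1) ^ p.2 / ((p.2 : ℝ) ^ k * (p.1 * ((p.1 : ℝ) - p.2))) else 0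

theorem norm_wedgeTerm_le {k : ℕ} (hk : 1 ≤ k) (p : ℕ × ℕ) :
    ‖wedgeTerm k p‖
      ≤ 2 * (|(((p.1 : ℤ) - p.2 : ℤ) : ℝ)| ^ (-(3 / 2) : ℝ) * (p.2 : ℝ) ^ (-(3 / 2) : ℝ)) := by
  obtain ⟨m, n⟩ := p
  by_cases h : n ∈ Ico 1 (2 * m) ∧ m ≠ n
  · obtain ⟨hmem, hne⟩ := h
    have hn : (1 : ℝ) ≤ n := by exact_mod_cast (mem_Ico.1 hmem).1
    have hnm : (n : ℝ) ≤ 2 * m := by exact_mod_cast (mem_Ico.1 hmem).2.le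
    have hm : (0 : ℝ) < m := by linarith
    have hpos : 0 < |(m : ℝ) - n| := abs_pos.2 (sub_ne_zero.2 (by exact_mod_cast hne))
    calc ‖wedgeTerm k (m, n)‖ = 1 / ((n : ℝ) ^ k * (m * |(m : ℝ) - n|)) := by
          rw [wedgeTerm, if_pos hmem]
          simp
      _ ≤ 1 / ((n : ℝ) ^ 1 * (m * |(m : ℝ) - n|)) := by gcongr
      _ = 1 / (m * (|(m : ℝ) - n| * n)) := by ring
      _ ≤ 2 * (|(m : ℝ) - n| ^ (-(3 / 2) : ℝ) * (n : ℝ) ^ (-(3 / 2) : ℝ)) :=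
          one_div_mul_mul_le_rpow hm hpos (by linarith)
            (abs_le.2 ⟨by linarith, by linarith⟩) hnm
      _ = _ := by push_cast; rfl
  · have hzero : wedgeTerm k (m, n) = 0 := by
      unfold wedgeTerm
      split_ifs with hmem
      · obtain rfl : m = n := not_not.1 fun hne => h ⟨hmem, hne⟩
        simp
      · rfl
    rw [hzero, norm_zero]
    positivity

theorem summable_wedgeTerm {k : ℕ} (hk : 1 ≤ k) : Summable (wedgeTerm k) := by
  have hnat : Summable fun n : ℕ => (n : ℝ) ^ (-(3 / 2) : ℝ) :=
    Real.summable_nat_rpow.2 (by norm_num)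
  have hint : Summable fun j : ℤ => |(j : ℝ)| ^ (-(3 / 2) : ℝ) :=
    Real.summable_abs_int_rpow (by norm_num)
  have hprod := hint.mul_of_nonneg hnat (fun _ => by positivity) fun _ => by positivity
  have hinj : Function.Injective fun p : ℕ × ℕ => ((p.1 : ℤ) - p.2, p.2) := by
    rintro ⟨a, b⟩ ⟨c, d⟩ h
    simp only [Prod.mk.injEq] at h ⊢
    omega
  exact .of_norm_bounded ((hprod.mul_left 2).comp_injective hinj) (norm_wedgeTerm_le hk)

theorem hasSum_wedgeTerm_left (k m : ℕ) :
    HasSum (fun n => wedgeTerm k (m, n))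
      (∑ n ∈ Ico 1 (2 * m), (-1 : ℝ) ^ n / ((n : ℝ) ^ k * (m * ((m : ℝ) - n)))) := by
  rw [← sum_congr rfl fun n hn => if_pos hn]
  exact hasSum_sum_of_ne_finset_zero fun n hn => if_neg hn

theorem hasSum_wedgeTerm_right (k n : ℕ) :
    HasSum (fun m => wedgeTerm k (m, n))
      (1 ^ n / (n : ℝ) ^ (k + 2) + 2 * ((-1) ^ n / (n : ℝ) ^ (k + 2))) := by
  rcases n.eq_zero_or_pos with rfl | hn
  · simp [wedgeTerm]
  have hn' : (n : ℝ) ≠ 0 := by positivity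
  have hinner := hasSum_div_mul_sub (show n / 2 + (n - 1 - n / 2) + 1 = n by omega)
  rw [harmonic_half_sub_harmonic hn] at hinner
  have hvalue : 1 ^ n / (n : ℝ) ^ (k + 2) + 2 * ((-1) ^ n / (n : ℝ) ^ (k + 2))
      = (-1) ^ n / (n : ℝ) ^ (k + 1) * ((1 + (-1) ^ n) / n + 1 / n) := by
    have hsq : ((-1 : ℝ) ^ n) ^ 2 = 1 := by rw [pow_right_comm, neg_one_sq, one_pow]
    linear_combination (-1 / (n : ℝ) ^ (k + 2)) * hsq
  rw [hvalue]
  refine (hinner.mul_left _).congr_fun fun m => ?_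
  rw [wedgeTerm, mul_ite, mul_zero]
  refine if_congr (by grind) ?_ rfl
  rw [div_mul_div_comm, mul_comm _ (n : ℝ), pow_succ', mul_assoc, mul_div_mul_left _ _ hn']

theorem hasSum_sum_Ico_neg_one_pow_div_mul_sub {k : ℕ} (hk : 1 ≤ k) :
    HasSum (fun m : ℕ => ∑ n ∈ Ico 1 (2 * m), (-1 : ℝ) ^ n / ((n : ℝ) ^ k * (m * ((m : ℝ) - n))))
      (eulerSum1 (k + 2) 1 + 2 * eulerSum1 (k + 2) (-1)) := by
  have hsum := (summable_wedgeTerm hk).hasSum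
  have hcolumns := ((Equiv.prodComm ℕ ℕ).hasSum_iff.2 hsum).prod_fiberwise
    (hasSum_wedgeTerm_right k)
  have hvalue := (hasSum_eulerSum1 (s := k + 2) (e := 1) (by omega) (by simp)).add
    ((hasSum_eulerSum1 (s := k + 2) (e := -1) (by omega) (by simp)).mul_left 2)
  rw [← hcolumns.unique hvalue]
  exact hsum.prod_fiberwise (hasSum_wedgeTerm_left k)

end DoubleSeries

/-- For `w ≥ 3`: `∑_{a+b=w, a≥2} 2^{a−1}(ζ(a,b̄) + ζ(ā,b̄)) = ζ(w) + w ζ(w̄)`. -/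
theorem weighted_sum_mixed (w : ℕ) (hw : 3 ≤ w) :
    ∑ a ∈ Finset.Icc 2 (w - 1),
        (2 : ℝ) ^ (a - 1) * (eulerSum2 a (w - a) 1 (-1) + eulerSum2 a (w - a) (-1) (-1))
      = eulerSum1 w 1 + (w : ℝ) * eulerSum1 w (-1) := by
  obtain ⟨k, rfl⟩ : ∃ k, w = k + 2 := ⟨w - 2, by omega⟩
  rw [Icc_sub_one_right_eq_Ico_of_not_isMin (by simp)]
  have hweighted := hasSum_sum fun a (ha : a ∈ Ico 2 (k + 2)) =>
    hasSum_eulerSum2_add_eulerSum2_neg (b := k + 2 - a) (e := -1) (mem_Ico.1 ha).1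
      (by have := (mem_Ico.1 ha).2; omega) (by simp)
  have hdiagonal := (hasSum_eulerSum1 (s := k + 2) (e := -1) (by omega) (by simp)).mul_left (k : ℝ)
  have hoffDiagonal := hasSum_sum_Ico_neg_one_pow_div_mul_sub (k := k) (by omega)
  simp only [sum_Ico_sum_Ico_neg_one_pow_div_pow_mul_pow] at hweighted
  rw [hweighted.unique (hdiagonal.add hoffDiagonal)]
  push_cast
  ring
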